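/- For all q+1 ≤ j,k ≤ n, the fourth Wirtinger derivative of ψ in the z-variables satisfies ∂^4ψ/∂z̄_j∂z_j∂z̄_k∂z_k(0,0) = Σ_{t=1}^q [2i/(|λ_t|+|λ_j|+|λ_k|)^2 · (|λ_t|+|λ_j|+|λ_k| − |λ_j||λ_k|/(|λ_j|+|λ_t|) − |λ_j||λ_k|/(|λ_k|+|λ_t|))] |∂^3φ/∂z_t∂z̄_j∂z̄_k(0)|^2 + i ∂^4φ/∂z̄_j∂z_j∂z̄_k∂z_k(0), where all derivatives of ψ are taken in the z-variables (w held fixed) and evaluated at (z,w) = (0,0). -/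

import Mathlib

open Complex Asymptotics

attribute [local instance] Classical.propDecidable

noncomputable section

/-- `ℂⁿ` as `Fin n → ℂ`. -/
abbrev Cn (n : ℕ) := Fin n → ℂ

/-- Wirtinger derivative `∂/∂z_j = (1/2)(∂/∂x_{2j-1} − i ∂/∂x_{2j})`. -/
def wd {n : ℕ} (j : Fin n) (f : Cn n → ℂ) : Cn n → ℂ := fun z =>
  (1 / 2 : ℂ) *
    (fderiv ℝ f z (Pi.single j 1) - Complex.I * fderiv ℝ f z (Pi.single j Complex.I))

/-- Wirtinger derivative `∂/∂z̄_j = (1/2)(∂/∂x_{2j-1} + i ∂/∂x_{2j})`. -/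
def wdb {n : ℕ} (j : Fin n) (f : Cn n → ℂ) : Cn n → ℂ := fun z =>
  (1 / 2 : ℂ) *
    (fderiv ℝ f z (Pi.single j 1) + Complex.I * fderiv ℝ f z (Pi.single j Complex.I))

/-- A real-valued function regarded as complex-valued. -/
def cplx {n : ℕ} (φ : Cn n → ℝ) : Cn n → ℂ := fun z => (φ z : ℂ)

/-- `φ` is smooth and `φ(z) = Σ_j λ_j |z_j|² + O(|z|³)` as `z → 0`. -/
def PhiOK {n : ℕ} (lam : Fin n → ℝ) (φ : Cn n → ℝ) : Prop :=
  ContDiff ℝ (⊤ : ℕ∞) φ ∧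
    (fun z : Cn n => φ z - ∑ j, lam j * Complex.normSq (z j)) =O[nhds 0] fun z => ‖z‖ ^ 3

/-- The conditions (a)–(e) on the phase function `ψ`. -/
def Admissible {n : ℕ} (lam : Fin n → ℝ) (φ : Cn n → ℝ) (ψ : Cn n → Cn n → ℂ) : Prop :=
  ContDiff ℝ (⊤ : ℕ∞) (fun p : Cn n × Cn n => ψ p.1 p.2) ∧
  -- (a)
  (∀ z, ψ z z = 0) ∧
  (∀ z w, ψ z w = - (starRingEnd ℂ) (ψ w z)) ∧
  -- (b)
  (∃ c : ℝ, 0 < c ∧ ∀ z w, c * ‖z - w‖ ^ 2 ≤ (ψ z w).im) ∧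
  -- (c): on the diagonal, ∂ψ/∂z̄_j = i ∂φ/∂z̄_j, ∂ψ/∂z_j = −i ∂φ/∂z_j,
  --      ∂ψ/∂w̄_j = −i ∂φ/∂z̄_j, ∂ψ/∂w_j = i ∂φ/∂z_j
  (∀ (z : Cn n) (j : Fin n), wdb j (fun x => ψ x z) z = Complex.I * wdb j (cplx φ) z) ∧
  (∀ (z : Cn n) (j : Fin n), wd j (fun x => ψ x z) z = - Complex.I * wd j (cplx φ) z) ∧
  (∀ (z : Cn n) (j : Fin n), wdb j (fun w => ψ z w) z = - Complex.I * wdb j (cplx φ) z) ∧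
  (∀ (z : Cn n) (j : Fin n), wd j (fun w => ψ z w) z = Complex.I * wd j (cplx φ) z) ∧
  -- (d): Σ_j (i ∂ψ/∂z̄_j + ∂φ/∂z̄_j)(−i ∂ψ/∂z_j + ∂φ/∂z_j) vanishes to infinite
  --      order on the diagonal
  (∀ (m : ℕ) (z : Cn n),
    iteratedFDeriv ℝ m
      (fun p : Cn n × Cn n =>
        ∑ j, (Complex.I * wdb j (fun x => ψ x p.2) p.1 + wdb j (cplx φ) p.1) *
             (- Complex.I * wd j (fun x => ψ x p.2) p.1 + wd j (cplx φ) p.1))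
      (z, z) = 0) ∧
  -- (e)
  ((fun p : Cn n × Cn n =>
      ψ p.1 p.2 -
        (Complex.I * ∑ j, ((|lam j| * Complex.normSq (p.1 j - p.2 j) : ℝ) : ℂ)
          + Complex.I * ∑ j, ((lam j : ℝ) : ℂ) *
              ((starRingEnd ℂ) (p.1 j) * p.2 j - (starRingEnd ℂ) (p.2 j) * p.1 j)))
    =O[nhds 0] fun p => ‖p‖ ^ 3)

set_option linter.unusedSimpArgs false

section core
variable {S : Type*} [CommRing S] [Algebra ℂ S]

lemma core_leib3 (ev : S →ₐ[ℂ] ℂ) (D1 D2 D3 : Derivation ℂ S S) (A B : S)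
    (hA : ev A = 0) (hB : ev B = 0) :
    ev (D1 (D2 (D3 (A * B)))) =
      ev (D1 A) * ev (D2 (D3 B)) + ev (D2 A) * ev (D1 (D3 B)) + ev (D3 A) * ev (D1 (D2 B))
      + ev (D1 B) * ev (D2 (D3 A)) + ev (D2 B) * ev (D1 (D3 A)) + ev (D3 B) * ev (D1 (D2 A)) := by
  simp only [Derivation.leibniz, smul_eq_mul, map_add, map_mul, hA, hB]
  ring

lemma core_leib4 (ev : S →ₐ[ℂ] ℂ) (D1 D2 D3 D4 : Derivation ℂ S S) (A B : S)
    (hA : ev A = 0) (hB : ev B = 0) :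
    ev (D1 (D2 (D3 (D4 (A * B))))) =
      ev (D1 A) * ev (D2 (D3 (D4 B))) + ev (D2 A) * ev (D1 (D3 (D4 B)))
      + ev (D3 A) * ev (D1 (D2 (D4 B))) + ev (D4 A) * ev (D1 (D2 (D3 B)))
      + ev (D1 B) * ev (D2 (D3 (D4 A))) + ev (D2 B) * ev (D1 (D3 (D4 A)))
      + ev (D3 B) * ev (D1 (D2 (D4 A))) + ev (D4 B) * ev (D1 (D2 (D3 A)))
      + ev (D1 (D2 A)) * ev (D3 (D4 B)) + ev (D1 (D3 A)) * ev (D2 (D4 B))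
      + ev (D1 (D4 A)) * ev (D2 (D3 B)) + ev (D2 (D3 A)) * ev (D1 (D4 B))
      + ev (D2 (D4 A)) * ev (D1 (D3 B)) + ev (D3 (D4 A)) * ev (D1 (D2 B)) := by
  simp only [Derivation.leibniz, smul_eq_mul, map_add, map_mul, hA, hB]
  ring

variable {n : ℕ}

/-- coefficient of the `A` factor -/
noncomputable def ca (lam : Fin n → ℝ) (s b : Bool) (m : Fin n) : ℂ :=
  if s = true ∧ b = false then ((lam m - |lam m| : ℝ) : ℂ) else 0
/-- coefficient of the `B` factor -/
noncomputable def cb (lam : Fin n → ℝ) (s b : Bool) (m : Fin n) : ℂ :=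
  if s = true ∧ b = true then ((lam m + |lam m| : ℝ) : ℂ) else 0

lemma core_third (ev : S →ₐ[ℂ] ℂ) (op : Bool → Bool → Fin n → Derivation ℂ S S)
    (hc : ∀ s b m s' b' m' f, op s b m (op s' b' m' f) = op s' b' m' (op s b m f))
    (lam : Fin n → ℝ) (ψ φ : S)
    (hV : ∀ b m, op false b m φ = op true b m φ)
    (A B : Fin n → S)
    (hAd : ∀ l, A l = Complex.I • op true true l ψ + op true true l φ)
    (hBd : ∀ l, B l = (-Complex.I) • op true false l ψ + op true false l φ)
    (hA0 : ∀ l, ev (A l) = 0) (hB0 : ∀ l, ev (B l) = 0)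
    (hA1 : ∀ s b m l, ev (op s b m (A l)) = if l = m then ca lam s b m else 0)
    (hB1 : ∀ s b m l, ev (op s b m (B l)) = if l = m then cb lam s b m else 0)
    (s1 b1 : Bool) (m1 : Fin n) (s2 b2 : Bool) (m2 : Fin n) (s3 b3 : Bool) (m3 : Fin n)
    (hE : ev (op s1 b1 m1 (op s2 b2 m2 (op s3 b3 m3 (∑ l, A l * B l)))) = 0) :
    (ca lam s1 b1 m1 + ca lam s2 b2 m2 + ca lam s3 b3 m3) *
      (-Complex.I * ev (op s1 b1 m1 (op s2 b2 m2 (op s3 b3 m3 ψ)))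
        + ev (op true b1 m1 (op true b2 m2 (op true b3 m3 φ))))
    + (cb lam s1 b1 m1 + cb lam s2 b2 m2 + cb lam s3 b3 m3) *
      (Complex.I * ev (op s1 b1 m1 (op s2 b2 m2 (op s3 b3 m3 ψ)))
        + ev (op true b1 m1 (op true b2 m2 (op true b3 m3 φ)))) = 0 := by
  have hVV : ∀ s b m, op s b m φ = op true b m φ := by
    intro s b m; cases s
    · exact hV b m
    · rfl
  have hphi : ev (op s1 b1 m1 (op s2 b2 m2 (op s3 b3 m3 φ))) =
      ev (op true b1 m1 (op true b2 m2 (op true b3 m3 φ))) := by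
    rw [hVV s3, hc s2, hVV s2, hc s1 _ _ _ _ m3, hc s1, hVV s1, hc true b2 m2 true b1 m1,
      hc true b3 m3 true b1 m1, hc true b3 m3 true b2 m2]
  rw [← hphi]
  simp only [map_sum] at hE
  simp only [core_leib3 ev _ _ _ _ _ (hA0 _) (hB0 _), hA1, hB1, Finset.sum_add_distrib, ite_mul,
    zero_mul, Finset.sum_ite_eq', Finset.mem_univ, if_true] at hE
  have key : ∀ s b m (X : Derivation ℂ S S) (Y : Derivation ℂ S S), 
     (∀ f, op s b m (X (Y f)) = X (Y (op s b m f))) → 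
     ca lam s b m * ev (X (Y (B m))) = 
      ca lam s b m * (-Complex.I * ev (op s b m (X (Y ψ))) + ev (op s b m (X (Y φ)))) := by
    intro s b m X Y h
    rw [h, h]
    cases s <;> cases b <;> simp [ca, hBd]
  have key' : ∀ s b m (X : Derivation ℂ S S) (Y : Derivation ℂ S S), 
     (∀ f, op s b m (X (Y f)) = X (Y (op s b m f))) → 
     cb lam s b m * ev (X (Y (A m))) = 
      cb lam s b m * (Complex.I * ev (op s b m (X (Y ψ))) + ev (op s b m (X (Y φ)))) := by
    intro s b m X Y h
    rw [h, h]
    cases s <;> cases b <;> simp [cb, hAd]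
  have c1 : ∀ s b m s' b' m' s'' b'' m'' f, op s b m (op s' b' m' (op s'' b'' m'' f)) =
     op s' b' m' (op s'' b'' m'' (op s b m f)) := by
    intro s b m s' b' m' s'' b'' m'' f
    rw [hc s b m s' b' m', hc s b m s'' b'' m'']
  rw [key _ _ _ _ _ (fun f => c1 _ _ _ _ _ _ _ _ _ f), key _ _ _ _ _ (fun f => c1 _ _ _ _ _ _ _ _ _ f),
    key _ _ _ _ _ (fun f => c1 _ _ _ _ _ _ _ _ _ f),
    key' _ _ _ _ _ (fun f => c1 _ _ _ _ _ _ _ _ _ f), key' _ _ _ _ _ (fun f => c1 _ _ _ _ _ _ _ _ _ f),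
    key' _ _ _ _ _ (fun f => c1 _ _ _ _ _ _ _ _ _ f)] at hE
  have e1 : ∀ f, op s2 b2 m2 (op s1 b1 m1 (op s3 b3 m3 f)) = op s1 b1 m1 (op s2 b2 m2 (op s3 b3 m3 f)) :=
    fun f => hc _ _ _ _ _ _ _
  have e2 : ∀ f, op s3 b3 m3 (op s1 b1 m1 (op s2 b2 m2 f)) = op s1 b1 m1 (op s2 b2 m2 (op s3 b3 m3 f)) :=
    fun f => c1 _ _ _ _ _ _ _ _ _ _
  simp only [e1, e2] at hE
  linear_combination hE

lemma solve_X (p r : ℝ) (h : 0 < p + r) (X c a b : ℂ) (ha : a = ((-2 * p : ℝ) : ℂ))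
    (hb : b = ((2 * r : ℝ) : ℂ))
    (hX : a * (-Complex.I * X + c) + b * (Complex.I * X + c) = 0) :
    X = -Complex.I * c * (((p - r) / (p + r) : ℝ) : ℂ) := by
  have hne : ((p : ℂ) + r) ≠ 0 := by exact_mod_cast h.ne'
  subst ha hb
  push_cast at hX ⊢
  field_simp
  linear_combination (-Complex.I / 2) * hX + (p + r) * X * Complex.I_sq

lemma special_alg (a x y : ℝ) (ha : 0 < a) (hx : 0 < x) (hy : 0 < y) (c Y : ℂ)
    (X1 X2 X3 X12 X13 X23 X123 : ℂ)
    (h1 : X1 = -Complex.I * c * (((a - 0) / (a + 0) : ℝ) : ℂ))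
    (h2 : X2 = -Complex.I * c * (((0 - x) / (0 + x) : ℝ) : ℂ))
    (h3 : X3 = -Complex.I * c * (((0 - y) / (0 + y) : ℝ) : ℂ))
    (h12 : X12 = -Complex.I * c * (((a - x) / (a + x) : ℝ) : ℂ))
    (h13 : X13 = -Complex.I * c * (((a - y) / (a + y) : ℝ) : ℂ))
    (h23 : X23 = -Complex.I * c * (((0 - (x + y)) / (0 + (x + y)) : ℝ) : ℂ))
    (h123 : X123 = -Complex.I * c * (((a - (x + y)) / (a + (x + y)) : ℝ) : ℂ))
    (hY : Y = -(starRingEnd ℂ) (-X1 - X2 - X3 + X12 + X13 + X23 - X123)) :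
    (Complex.I * Y + (starRingEnd ℂ) c) * (-Complex.I * X123 + c) =
      (2 * (x + y)) * ((2 / (a + x + y) ^ 2 *
            (a + x + y - x * y / (x + a) - x * y / (y + a)) : ℝ) : ℂ) *
          (Complex.normSq c : ℂ) := by
  have e1 : -Complex.I * X123 + c = c * ((1 - (a - (x + y)) / (a + (x + y)) : ℝ) : ℂ) := by
    rw [h123]; push_cast
    linear_combination (c * ((a - (x + y)) / (a + (x + y)))) * Complex.I_sq
  have e2 : -X1 - X2 - X3 + X12 + X13 + X23 - X123 =
      -Complex.I * c * (((1 : ℝ) + ((a - x) / (a + x)) + (a - y) / (a + y) - 1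
        - (a - (x + y)) / (a + (x + y)) : ℝ) : ℂ) := by
    have r1 : (a - 0) / (a + 0) = 1 := by rw [sub_zero, add_zero]; exact div_self ha.ne'
    have r2 : (0 - x) / (0 + x) = -1 := by rw [zero_sub, zero_add, neg_div, div_self hx.ne']
    have r3 : (0 - y) / (0 + y) = -1 := by rw [zero_sub, zero_add, neg_div, div_self hy.ne']
    have r4 : (0 - (x + y)) / (0 + (x + y)) = -1 := by
      rw [zero_sub, zero_add, neg_div, div_self (by positivity)]
    rw [r1] at h1; rw [r2] at h2; rw [r3] at h3; rw [r4] at h23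
    rw [h1, h2, h3, h12, h13, h23, h123]
    push_cast
    ring
  have e3 : Complex.I * Y + (starRingEnd ℂ) c = (starRingEnd ℂ) c *
      ((1 + (((1 : ℝ) + ((a - x) / (a + x)) + (a - y) / (a + y) - 1
        - (a - (x + y)) / (a + (x + y)))) : ℝ) : ℂ) := by
    rw [hY, e2, map_mul, map_mul, map_neg, Complex.conj_I, Complex.conj_ofReal]
    push_cast
    linear_combination (-(starRingEnd ℂ) c * ((1 + (a - x) / (a + x) + (a - y) / (a + y) - 1
        - (a - (x + y)) / (a + (x + y))))) * Complex.I_sq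
  rw [e1, e3, Complex.normSq_eq_conj_mul_self]
  have key : (1 + (((1 : ℝ) + ((a - x) / (a + x)) + (a - y) / (a + y) - 1
        - (a - (x + y)) / (a + (x + y))))) * (1 - (a - (x + y)) / (a + (x + y))) =
     (2 * (x + y)) * (2 / (a + x + y) ^ 2 *
            (a + x + y - x * y / (x + a) - x * y / (y + a))) := by
    have n1 : a + x ≠ 0 := by positivity
    have n2 : a + y ≠ 0 := by positivity
    have n1' : x + a ≠ 0 := by positivity
    have n2' : y + a ≠ 0 := by positivity
    have n3 : a + (x + y) ≠ 0 := by positivity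
    have n3' : a + x + y ≠ 0 := by positivity
    field_simp
    ring
  have keyC := congrArg (fun r : ℝ => (r : ℂ)) key
  simp only [Complex.ofReal_mul] at keyC ⊢
  push_cast at keyC ⊢
  linear_combination (c * (starRingEnd ℂ) c) * keyC

theorem core_final (ev : S →ₐ[ℂ] ℂ) (op : Bool → Bool → Fin n → Derivation ℂ S S)
    (hc : ∀ s b m s' b' m' f, op s b m (op s' b' m' f) = op s' b' m' (op s b m f))
    (q : ℕ) (lam : Fin n → ℝ)
    (hneg : ∀ j : Fin n, (j : ℕ) < q → lam j < 0)
    (hpos : ∀ j : Fin n, q ≤ (j : ℕ) → 0 < lam j) (ψ φ : S)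
    (hV : ∀ b m, op false b m φ = op true b m φ)
    (A B : Fin n → S)
    (hAd : ∀ l, A l = Complex.I • op true true l ψ + op true true l φ)
    (hBd : ∀ l, B l = (-Complex.I) • op true false l ψ + op true false l φ)
    (hA0 : ∀ l, ev (A l) = 0) (hB0 : ∀ l, ev (B l) = 0)
    (hA1 : ∀ s b m l, ev (op s b m (A l)) = if l = m then ca lam s b m else 0)
    (hB1 : ∀ s b m l, ev (op s b m (B l)) = if l = m then cb lam s b m else 0)
    (hE3 : ∀ s1 b1 m1 s2 b2 m2 s3 b3 m3,
      ev (op s1 b1 m1 (op s2 b2 m2 (op s3 b3 m3 (∑ l, A l * B l)))) = 0)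
    (hE4 : ∀ s1 b1 m1 s2 b2 m2 s3 b3 m3 s4 b4 m4,
      ev (op s1 b1 m1 (op s2 b2 m2 (op s3 b3 m3 (op s4 b4 m4 (∑ l, A l * B l))))) = 0)
    (hdiag : ∀ b1 m1 b2 m2 b3 m3,
      ev (op false b1 m1 (op false b2 m2 (op false b3 m3 ψ))) = 0)
    (hsym : ∀ b1 m1 b2 m2 b3 m3,
      ev (op true (!b1) m1 (op true (!b2) m2 (op true (!b3) m3 ψ))) =
       - (starRingEnd ℂ) (ev ((op false b1 m1 - op true b1 m1) ((op false b2 m2 - op true b2 m2)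
          ((op false b3 m3 - op true b3 m3) ψ)))))
    (hreal : ∀ b1 m1 b2 m2 b3 m3,
      ev (op true (!b1) m1 (op true (!b2) m2 (op true (!b3) m3 φ))) =
       (starRingEnd ℂ) (ev (op true b1 m1 (op true b2 m2 (op true b3 m3 φ)))))
    (j k : Fin n) (hj : q ≤ (j : ℕ)) (hk : q ≤ (k : ℕ)) :
    ev (op true true j (op true false j (op true true k (op true false k ψ)))) =
      (∑ t : Fin n, if (t : ℕ) < q then
        ((2 / (|lam t| + |lam j| + |lam k|) ^ 2 *
            (|lam t| + |lam j| + |lam k|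
              - |lam j| * |lam k| / (|lam j| + |lam t|)
              - |lam j| * |lam k| / (|lam k| + |lam t|)) : ℝ) : ℂ) * Complex.I *
          (Complex.normSq (ev (op true false t (op true true j (op true true k φ)))) : ℂ)
      else 0)
      + Complex.I * ev (op true true j (op true false j (op true true k (op true false k φ)))) := by
  have h3 := fun s1 b1 m1 s2 b2 m2 s3 b3 m3 => core_third ev op hc lam ψ φ hV A B hAd hBd hA0 hB0
    hA1 hB1 s1 b1 m1 s2 b2 m2 s3 b3 m3 (hE3 s1 b1 m1 s2 b2 m2 s3 b3 m3)
  have lj := hpos j hj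
  have lk := hpos k hk
  have cjA : ∀ m, 0 < lam m → ca lam true false m = 0 := by
    intro m hm; simp [ca, abs_of_pos hm]
  have ljC : (lam j : ℂ) ≠ 0 := by exact_mod_cast lj.ne'
  -- vanishing of second derivatives of A containing a bar
  have van : ∀ i, 0 < lam i → ∀ b m, 0 < lam m → ∀ l,
      ev (op true true i (op true b m (A l))) = 0 := by
    intro i hi b m hm l
    have h := h3 true true i true b m true true l
    have e1 : ca lam true true i = 0 := by simp [ca]
    have e2 : ca lam true b m = 0 := by cases b <;> simp [ca, abs_of_pos hm]
    have e3 : ca lam true true l = 0 := by simp [ca]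
    have e4 : cb lam true true i + cb lam true b m + cb lam true true l ≠ 0 := by
      have : 0 ≤ lam l + |lam l| := by linarith [neg_abs_le (lam l)]
      have h2 : 0 < |lam i| := abs_pos.2 hi.ne'
      have h3 : 0 < |lam m| := abs_pos.2 hm.ne'
      cases b
      · simp only [cb, and_self, if_true]
        simp only [Bool.false_eq_true, and_false, if_false]
        rw [add_zero]
        have : lam i + |lam i| + (lam l + |lam l|) ≠ 0 := by positivity
        exact_mod_cast this
      · simp only [cb, and_self, if_true]
        have : lam i + |lam i| + (lam m + |lam m|) + (lam l + |lam l|) ≠ 0 := by positivity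
        exact_mod_cast this
    rw [e1, e2, e3] at h
    simp only [add_zero, zero_mul, zero_add] at h
    have := (mul_eq_zero.1 h).resolve_left e4
    rw [hAd]
    simpa using this
  have van2 : ∀ l : Fin n, q ≤ (l : ℕ) → ev (op true false j (op true false k (A l))) = 0 := by
    intro l hl
    have ll := hpos l hl
    have h := h3 true false j true false k true true l
    have e3 : ca lam true true l = 0 := by simp [ca]
    have e4 : cb lam true true l ≠ 0 := by
      simp only [cb, and_self, if_true]
      have : lam l + |lam l| ≠ 0 := by positivity
      exact_mod_cast this
    rw [cjA j lj, cjA k lk, e3] at h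
    have e5 : cb lam true false j = 0 := by simp [cb]
    have e6 : cb lam true false k = 0 := by simp [cb]
    rw [e5, e6] at h
    simp only [add_zero, zero_mul, zero_add] at h
    have := (mul_eq_zero.1 h).resolve_left e4
    rw [hAd]
    simpa using this
  have special : ∀ t : Fin n, (t : ℕ) < q →
      ev (op true false j (op true false k (A t))) * ev (op true true j (op true true k (B t)))
       = (2 * (lam j + lam k)) * ((2 / (|lam t| + |lam j| + |lam k|) ^ 2 *
            (|lam t| + |lam j| + |lam k|
              - |lam j| * |lam k| / (|lam j| + |lam t|)
              - |lam j| * |lam k| / (|lam k| + |lam t|)) : ℝ) : ℂ) *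
          (Complex.normSq (ev (op true false t (op true true j (op true true k φ)))) : ℂ) := by
    intro t ht
    have lt := hneg t ht
    have habs : |lam t| = -lam t := abs_of_neg lt
    have f1 : ca lam true false t = ((-2 * (-lam t) : ℝ) : ℂ) := by
      simp only [ca, and_self, if_true, habs]; congr 1; ring
    have f2 : cb lam true true j = ((2 * lam j : ℝ) : ℂ) := by
      simp only [cb, and_self, if_true, abs_of_pos lj]; congr 1; ring
    have f3 : cb lam true true k = ((2 * lam k : ℝ) : ℂ) := by
      simp only [cb, and_self, if_true, abs_of_pos lk]; congr 1; ring
    have g1 : ∀ m, ca lam false false m = 0 := by intro m; simp [ca]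
    have g2 : ∀ b m, ca lam b true m = 0 := by intro b m; simp [ca]
    have g3 : ∀ m, cb lam false true m = 0 := by intro m; simp [cb]
    have g4 : ∀ b m, cb lam b false m = 0 := by intro b m; simp [cb]
    have la : 0 < -lam t := by linarith
    have hS := hsym false t true j true k
    have hR := hreal false t true j true k
    simp only [Bool.not_false, Bool.not_true] at hS hR
    have eA : ev (op true false j (op true false k (A t))) =
        Complex.I * ev (op true true t (op true false j (op true false k ψ))) +
        (starRingEnd ℂ) (ev (op true false t (op true true j (op true true k φ)))) := by
      rw [← hR, hAd]
      simp only [map_add, Derivation.map_smul, map_smul, smul_eq_mul]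
      have : ∀ f, op true false j (op true false k (op true true t f)) =
        op true true t (op true false j (op true false k f)) := by
        intro f; rw [hc true false k, hc true false j]
      rw [this, this]
    have eB : ev (op true true j (op true true k (B t))) =
        -Complex.I * ev (op true false t (op true true j (op true true k ψ))) +
        ev (op true false t (op true true j (op true true k φ))) := by
      rw [hBd]
      simp only [map_add, Derivation.map_smul, map_smul, smul_eq_mul]
      have : ∀ f, op true true j (op true true k (op true false t f)) =
        op true false t (op true true j (op true true k f)) := by
        intro f; rw [hc true true k, hc true true j]
      rw [this, this]
    rw [eA, eB, habs, abs_of_pos lj, abs_of_pos lk]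
    refine special_alg (-lam t) (lam j) (lam k) la lj lk _ _
      (ev (op true false t (op false true j (op false true k ψ))))
      (ev (op false false t (op true true j (op false true k ψ))))
      (ev (op false false t (op false true j (op true true k ψ))))
      (ev (op true false t (op true true j (op false true k ψ))))
      (ev (op true false t (op false true j (op true true k ψ))))
      (ev (op false false t (op true true j (op true true k ψ))))
      (ev (op true false t (op true true j (op true true k ψ)))) ?_ ?_ ?_ ?_ ?_ ?_ ?_ ?_
    · exact solve_X _ _ (by linarith) _ _ _ _ (by simp [f1, g1, g2]) (by simp [f2, f3, g3, g4]) (h3 true false t false true j false true k)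
    · exact solve_X _ _ (by linarith) _ _ _ _ (by simp [f1, g1, g2]) (by simp [f2, f3, g3, g4]) (h3 false false t true true j false true k)
    · exact solve_X _ _ (by linarith) _ _ _ _ (by simp [f1, g1, g2]) (by simp [f2, f3, g3, g4]) (h3 false false t false true j true true k)
    · exact solve_X _ _ (by linarith) _ _ _ _ (by simp [f1, g1, g2]) (by simp [f2, f3, g3, g4]) (h3 true false t true true j false true k)
    · exact solve_X _ _ (by linarith) _ _ _ _ (by simp [f1, g1, g2]) (by simp [f2, f3, g3, g4]) (h3 true false t false true j true true k)
    · exact solve_X _ _ (by linarith) _ _ _ _ (by simp [f1, g1, g2]) (by simp [f2, f3, g3, g4]; ring) (h3 false false t true true j true true k)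
    · exact solve_X _ _ (by linarith) _ _ _ _ (by simp [f1, g1, g2]) (by simp [f2, f3, g3, g4]; ring) (h3 true false t true true j true true k)
    · rw [hS]
      simp only [Derivation.sub_apply, map_sub, map_add, map_neg, hdiag, map_zero]
      ring
  have h4 := hE4 true true j true false j true true k true false k
  simp only [map_sum] at h4
  have comm1 : ∀ l, ev (op true false j (op true true k (A l))) = 0 := by
    intro l; rw [hc]; exact van k lk false j lj l
  have e1 : ca lam true true j = 0 := by simp [ca]
  have e2 : ca lam true true k = 0 := by simp [ca]
  have e3 : cb lam true false j = 0 := by simp [cb]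
  have e4 : cb lam true false k = 0 := by simp [cb]
  have e5 : cb lam true true j = 2 * lam j := by simp [cb, abs_of_pos lj]; ring
  have e6 : cb lam true true k = 2 * lam k := by simp [cb, abs_of_pos lk]; ring
  simp only [core_leib4 ev _ _ _ _ _ _ (hA0 _) (hB0 _), hA1, hB1, cjA j lj, cjA k lk, e1, e2, e3, e4,
    van j lj _ j lj, van j lj _ k lk, van k lk _ k lk, comm1,
    Finset.sum_add_distrib, ite_mul, ite_self, Finset.sum_const_zero, add_zero, zero_add,
    zero_mul, Finset.sum_ite_eq', Finset.mem_univ, if_true] at h4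
  rw [e5, e6] at h4
  have hs : ∑ l, ev (op true false j (op true false k (A l))) * ev (op true true j (op true true k (B l)))
     = (2 * (lam j + lam k)) * ∑ t : Fin n, if (t : ℕ) < q then
        ((2 / (|lam t| + |lam j| + |lam k|) ^ 2 *
            (|lam t| + |lam j| + |lam k|
              - |lam j| * |lam k| / (|lam j| + |lam t|)
              - |lam j| * |lam k| / (|lam k| + |lam t|)) : ℝ) : ℂ) *
          (Complex.normSq (ev (op true false t (op true true j (op true true k φ)))) : ℂ)
      else 0 := by
    rw [Finset.mul_sum]
    refine Finset.sum_congr rfl fun t _ => ?_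
    split_ifs with ht
    · rw [special t ht]; ring
    · rw [van2 t (not_lt.1 ht)]; ring
  rw [hs] at h4
  have hA3 : ev (op true false j (op true true k (op true false k (A j)))) =
     Complex.I * ev (op true true j (op true false j (op true true k (op true false k ψ))))
     + ev (op true true j (op true false j (op true true k (op true false k φ)))) := by
    rw [hAd]
    simp only [map_add, Derivation.map_smul, map_smul, smul_eq_mul]
    have : ∀ f, op true false j (op true true k (op true false k (op true true j f))) =
      op true true j (op true false j (op true true k (op true false k f))) := by
      intro f
      rw [hc true false k true true j, hc true true k true true j, hc true false j true true j]
    rw [this, this]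
  have hA4 : ev (op true true j (op true false j (op true false k (A k)))) =
     Complex.I * ev (op true true j (op true false j (op true true k (op true false k ψ))))
     + ev (op true true j (op true false j (op true true k (op true false k φ)))) := by
    rw [hAd]
    simp only [map_add, Derivation.map_smul, map_smul, smul_eq_mul]
    have : ∀ f, op true true j (op true false j (op true false k (op true true k f))) =
      op true true j (op true false j (op true true k (op true false k f))) := by
      intro f
      rw [hc true false k true true k]
    rw [this, this]
  rw [hA3, hA4] at h4
  have hne : (2 * ((lam j : ℂ) + lam k)) ≠ 0 := by
    have : 2 * (lam j + lam k) ≠ 0 := by positivity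
    exact_mod_cast this
  have hfin : (2 * ((lam j : ℂ) + lam k)) * (Complex.I * ev (op true true j (op true false j (op true true k (op true false k ψ))))
     + ev (op true true j (op true false j (op true true k (op true false k φ)))) + ∑ t : Fin n, if (t : ℕ) < q then
        ((2 / (|lam t| + |lam j| + |lam k|) ^ 2 *
            (|lam t| + |lam j| + |lam k|
              - |lam j| * |lam k| / (|lam j| + |lam t|)
              - |lam j| * |lam k| / (|lam k| + |lam t|)) : ℝ) : ℂ) *
          (Complex.normSq (ev (op true false t (op true true j (op true true k φ)))) : ℂ)
      else 0) = 0 := by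
    linear_combination h4
  have hfin2 := (mul_eq_zero.1 hfin).resolve_left hne
  have hre : (∑ t : Fin n, if (t : ℕ) < q then
        ((2 / (|lam t| + |lam j| + |lam k|) ^ 2 *
            (|lam t| + |lam j| + |lam k|
              - |lam j| * |lam k| / (|lam j| + |lam t|)
              - |lam j| * |lam k| / (|lam k| + |lam t|)) : ℝ) : ℂ) * Complex.I *
          (Complex.normSq (ev (op true false t (op true true j (op true true k φ)))) : ℂ)
      else 0) = Complex.I * (∑ t : Fin n, if (t : ℕ) < q then
        ((2 / (|lam t| + |lam j| + |lam k|) ^ 2 *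
            (|lam t| + |lam j| + |lam k|
              - |lam j| * |lam k| / (|lam j| + |lam t|)
              - |lam j| * |lam k| / (|lam k| + |lam t|)) : ℝ) : ℂ) *
          (Complex.normSq (ev (op true false t (op true true j (op true true k φ)))) : ℂ)
      else 0) := by
    rw [Finset.mul_sum]
    refine Finset.sum_congr rfl fun t _ => ?_
    split_ifs
    · ring
    · ring
  rw [hre]
  linear_combination (-Complex.I) * hfin2 + (ev (op true true j (op true false j (op true true k (op true false k ψ))))) * Complex.I_sq

end core

section ana
variable {n : ℕ}

lemma two_le_infty : (2 : WithTop ℕ∞) ≤ ((⊤ : ℕ∞) : WithTop ℕ∞) :=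
  WithTop.coe_le_coe.2 (le_top : (2 : ℕ∞) ≤ ⊤)

lemma o3_fderiv {E : Type*} [NormedAddCommGroup E] [NormedSpace ℝ E] (f : E → ℂ)
    (hf : ContDiff ℝ (⊤ : ℕ∞) f) (h : f =O[nhds 0] fun x => ‖x‖ ^ 3) :
    fderiv ℝ f 0 = 0 ∧ fderiv ℝ (fderiv ℝ f) 0 = 0 := by
  have h0 : f 0 = 0 := by
    simpa using h.eq_zero_imp.self_of_nhds
  have h1 : fderiv ℝ f 0 = 0 := by
    apply HasFDerivAt.fderiv
    rw [hasFDerivAt_iff_isLittleO_nhds_zero]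
    simp only [zero_add, h0, sub_zero, _root_.zero_apply]
    refine h.trans_isLittleO ?_
    simpa using (Asymptotics.isLittleO_norm_pow_id (E' := E) (n := 3) (by norm_num))
  refine ⟨h1, ?_⟩
  have hf1 : ContDiff ℝ (⊤ : ℕ∞) (fderiv ℝ f) := hf.fderiv_right (by simp)
  have hd : Differentiable ℝ f := hf.differentiable (by simp)
  have hd1 : Differentiable ℝ (fderiv ℝ f) := hf1.differentiable (by simp)
  have hvv : ∀ v, fderiv ℝ (fderiv ℝ f) 0 v v = 0 := by
    intro v
    set g : ℝ → ℂ := fun t => f (t • v) with hg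
    have hgc : ContDiff ℝ (⊤ : ℕ∞) g := hf.comp (contDiff_id.smul contDiff_const)
    have hl : ∀ t : ℝ, HasDerivAt (fun t : ℝ => t • v) v t := fun t => by
      simpa using (hasDerivAt_id t).smul_const v
    have hg1 : deriv g = fun t => fderiv ℝ f (t • v) v := by
      funext t
      exact ((hd _).hasFDerivAt.comp_hasDerivAt t (hl t)).deriv
    have hg2 : deriv (deriv g) 0 = fderiv ℝ (fderiv ℝ f) 0 v v := by
      rw [hg1]
      have := (hd1 ((0:ℝ) • v)).hasFDerivAt.comp_hasDerivAt (0:ℝ) (hl 0)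
      have h2 := this.clm_apply (hasDerivAt_const (0:ℝ) v)
      simpa using h2.deriv
    have ht := taylor_isLittleO_univ (f := g) (x₀ := 0) (n := 2) (hgc.of_le two_le_infty)
    have hgO : g =o[nhds 0] fun t : ℝ => t ^ 2 := by
      have : Filter.Tendsto (fun t : ℝ => t • v) (nhds 0) (nhds 0) := by
        have := (hl 0).continuousAt.tendsto
        simpa using this
      have h2 := h.comp_tendsto this
      have h3 : ((fun x : E => ‖x‖ ^ 3) ∘ fun t : ℝ => t • v) =O[nhds 0] fun t : ℝ => t ^ 3 := by
        refine Asymptotics.IsBigO.of_bound (‖v‖ ^ 3) (Filter.Eventually.of_forall fun t => ?_)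
        simp [norm_smul, mul_pow]
        rw [mul_comm]
      refine (h2.trans h3).trans_isLittleO ?_
      exact Asymptotics.isLittleO_pow_pow (by norm_num)
    have hT : (fun t => taylorWithinEval g 2 Set.univ 0 t) =o[nhds 0] fun t : ℝ => t ^ 2 := by
      have := hgO.sub (by simpa using ht)
      simpa using this
    have hT' : ∀ t, taylorWithinEval g 2 Set.univ 0 t = ((1/2 : ℝ) * t ^ 2) • deriv (deriv g) 0 := by
      intro t
      have e0 : g 0 = 0 := by simp [hg, h0]
      have e1 : deriv g 0 = 0 := by rw [hg1]; simp [h1]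
      rw [taylorWithinEval_succ, taylorWithinEval_succ, taylor_within_zero_eval]
      simp only [iteratedDerivWithin_univ, iteratedDeriv_succ, iteratedDeriv_zero, e0, e1]
      simp
      norm_num
    simp only [hT'] at hT
    rw [← hg2]
    rw [Asymptotics.isLittleO_iff] at hT
    by_contra hne
    have hp : 0 < ‖deriv (deriv g) 0‖ := norm_pos_iff.2 hne
    have := hT (c := ‖deriv (deriv g) 0‖ / 4) (by positivity)
    obtain ⟨ε, hε, hb⟩ := Metric.eventually_nhds_iff.1 this
    have := hb (y := ε / 2) (by rw [Real.dist_eq, sub_zero, abs_of_pos (by positivity)]; linarith)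
    rw [norm_smul, Real.norm_eq_abs, Real.norm_eq_abs, abs_of_pos (by positivity), abs_of_pos (by positivity)] at this
    have : 0 < ‖deriv (deriv g) 0‖ * (ε/2)^2 := by positivity
    nlinarith
  have hsymm : IsSymmSndFDerivAt ℝ f 0 := by
    apply ContDiffAt.isSymmSndFDerivAt (n := (⊤ : ℕ∞)) hf.contDiffAt
    simpa using two_le_infty
  ext v w
  have a1 := hvv (v + w)
  simp only [map_add, _root_.add_apply, hvv, zero_add, add_zero] at a1
  have a2 := hsymm.eq v w
  rw [a2] at a1
  have : (2:ℂ) * fderiv ℝ (fderiv ℝ f) 0 w v = 0 := by linear_combination a1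
  simp at this
  simp [a2, this]

/-- complexified directional derivative -/
def dd {E : Type*} [NormedAddCommGroup E] [NormedSpace ℝ E] (a b : E) (f : E → ℂ) : E → ℂ :=
  fun x => (1 / 2 : ℂ) * (fderiv ℝ f x a + Complex.I * fderiv ℝ f x b)

/-- functional -/
def dL {E : Type*} [NormedAddCommGroup E] [NormedSpace ℝ E] (a b : E) : (E →L[ℝ] ℂ) →L[ℝ] ℂ :=
  (1 / 2 : ℂ) • (ContinuousLinearMap.apply ℝ ℂ a + Complex.I • ContinuousLinearMap.apply ℝ ℂ b)

section gen
variable {E : Type*} [NormedAddCommGroup E] [NormedSpace ℝ E]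

lemma dd_eq (a b : E) (f : E → ℂ) : dd a b f = dL a b ∘ fderiv ℝ f := by
  funext x; simp [dd, dL, mul_add]

lemma dd_smooth (a b : E) {f : E → ℂ} (hf : ContDiff ℝ (⊤ : ℕ∞) f) :
    ContDiff ℝ (⊤ : ℕ∞) (dd a b f) := by
  rw [dd_eq]
  exact (dL a b).contDiff.comp (hf.fderiv_right (by simp))

lemma dd_comm (a b a' b' : E) {f : E → ℂ} (hf : ContDiff ℝ (⊤ : ℕ∞) f) :
    dd a b (dd a' b' f) = dd a' b' (dd a b f) := by
  have hf1 : ContDiff ℝ (⊤ : ℕ∞) (fderiv ℝ f) := hf.fderiv_right (by simp)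
  have hd1 : Differentiable ℝ (fderiv ℝ f) := hf1.differentiable (by simp)
  have key : ∀ (a b : E) (x v : E), fderiv ℝ (dd a b f) x v = dL a b (fderiv ℝ (fderiv ℝ f) x v) := by
    intro a b x v
    rw [dd_eq, fderiv_comp _ (dL a b).differentiableAt (hd1 x)]
    simp
  funext x
  have hsymm : IsSymmSndFDerivAt ℝ f x := by
    apply ContDiffAt.isSymmSndFDerivAt (n := (⊤ : ℕ∞)) hf.contDiffAt
    simpa using two_le_infty
  change (1 / 2 : ℂ) * (fderiv ℝ (dd a' b' f) x a + Complex.I * fderiv ℝ (dd a' b' f) x b) =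
    (1 / 2 : ℂ) * (fderiv ℝ (dd a b f) x a' + Complex.I * fderiv ℝ (dd a b f) x b')
  simp only [key a b, key a' b', dL]
  simp
  rw [hsymm.eq a a', hsymm.eq a b', hsymm.eq b a', hsymm.eq b b']
  ring

lemma dd_flat (a b : E) {f : E → ℂ} (hf : ContDiff ℝ (⊤ : ℕ∞) f) (x : E)
    (h : ∀ m, iteratedFDeriv ℝ m f x = 0) : ∀ m, iteratedFDeriv ℝ m (dd a b f) x = 0 := by
  intro m
  have hf1 : ContDiff ℝ (⊤ : ℕ∞) (fderiv ℝ f) := hf.fderiv_right (by simp)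
  rw [dd_eq, ContinuousLinearMap.iteratedFDeriv_comp_left (n := (⊤ : ℕ∞)) _ hf1.contDiffAt (by exact_mod_cast le_top)]
  have : iteratedFDeriv ℝ m (fderiv ℝ f) x = 0 := by
    rw [← norm_eq_zero, norm_iteratedFDeriv_fderiv, h, norm_zero]
  rw [this]; ext; simp

variable (E) in
/-- algebra of smooth functions -/
def smoothAlg : Subalgebra ℂ (E → ℂ) where
  carrier := {f | ContDiff ℝ (⊤ : ℕ∞) f}
  mul_mem' := by
    intro f g h1 h2
    simp only [Set.mem_ofPred_eq] at *
    exact ContDiff.mul h1 h2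
  add_mem' := by
    intro f g h1 h2
    simp only [Set.mem_ofPred_eq] at *
    exact ContDiff.add h1 h2
  algebraMap_mem' := by
    intro r
    simp only [Set.mem_ofPred_eq]
    exact contDiff_const (c := r)

lemma sm (f : smoothAlg E) : ContDiff ℝ (⊤ : ℕ∞) f.1 := by
  have := f.2
  change f.1 ∈ {f | ContDiff ℝ (⊤ : ℕ∞) f} at this
  simpa only [Set.mem_ofPred_eq] using this

lemma mem_sm {f : E → ℂ} (h : ContDiff ℝ (⊤ : ℕ∞) f) : f ∈ smoothAlg E := by
  change f ∈ {f | ContDiff ℝ (⊤ : ℕ∞) f}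
  simpa only [Set.mem_ofPred_eq] using h

/-- derivation of the algebra of smooth functions -/
def dDer (a b : E) : Derivation ℂ (smoothAlg E) (smoothAlg E) :=
  Derivation.mk' 
    { toFun := fun f => ⟨dd a b f.1, mem_sm (dd_smooth a b (sm f))⟩
      map_add' := by
        intro f g
        have hf : Differentiable ℝ f.1 := ContDiff.differentiable (sm f) (by simp)
        have hg : Differentiable ℝ g.1 := ContDiff.differentiable (sm g) (by simp)
        apply Subtype.ext
        funext x
        simp [dd, fderiv_add (hf x) (hg x)]
        ring
      map_smul' := by
        intro c f
        have hf : Differentiable ℝ f.1 := ContDiff.differentiable (sm f) (by simp)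
        apply Subtype.ext
        funext x
        simp [dd, fderiv_const_smul (hf x)]
        ring }
    (by
      intro f g
      have hf : Differentiable ℝ f.1 := ContDiff.differentiable (sm f) (by simp)
      have hg : Differentiable ℝ g.1 := ContDiff.differentiable (sm g) (by simp)
      apply Subtype.ext
      funext x
      simp [dd, fderiv_mul (hf x) (hg x)]
      ring)

@[simp] lemma dDer_coe (a b : E) (f : smoothAlg E) : (dDer a b f).1 = dd a b f.1 := rfl

/-- evaluation -/
def evAt (x : E) : smoothAlg E →ₐ[ℂ] ℂ := (Pi.evalAlgHom ℂ (fun _ : E => ℂ) x).comp (smoothAlg E).val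

@[simp] lemma evAt_apply (x : E) (f : smoothAlg E) : evAt x f = f.1 x := rfl

/-- linear functions -/
def coord (L : E →L[ℝ] ℂ) : smoothAlg E := ⟨L, mem_sm L.contDiff⟩

lemma dDer_coord (a b : E) (L : E →L[ℝ] ℂ) :
    dDer a b (coord L) = algebraMap ℂ _ ((1 / 2 : ℂ) * (L a + Complex.I * L b)) := by
  apply Subtype.ext
  funext x
  simp [coord, dd]

lemma dd_conj_comp (a b : E) (T : E →L[ℝ] E) {f : E → ℂ} (hf : ContDiff ℝ (⊤ : ℕ∞) f) :
    dd a b (fun p => (starRingEnd ℂ) (f (T p))) =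
      fun p => (starRingEnd ℂ) (dd (T a) (- T b) f (T p)) := by
  have hd : Differentiable ℝ f := hf.differentiable (by simp)
  funext x
  have h : HasFDerivAt (fun p => (starRingEnd ℂ) (f (T p)))
     ((Complex.conjCLE : ℂ →L[ℝ] ℂ).comp ((fderiv ℝ f (T x)).comp T)) x := by
    exact (Complex.conjCLE : ℂ →L[ℝ] ℂ).hasFDerivAt.comp x ((hd (T x)).hasFDerivAt.comp x T.hasFDerivAt)
  simp [dd, h.fderiv, map_ofNat]

lemma o3_dd (f : smoothAlg E) (h : f.1 =O[nhds 0] fun x => ‖x‖ ^ 3) (a b a' b' : E) :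
    evAt 0 (dDer a b f) = 0 ∧ evAt 0 (dDer a b (dDer a' b' f)) = 0 := by
  obtain ⟨h1, h2⟩ := o3_fderiv f.1 (sm f) h
  have hf1 : ContDiff ℝ (⊤ : ℕ∞) (fderiv ℝ f.1) := ContDiff.fderiv_right (sm f) (by simp)
  have hd1 : Differentiable ℝ (fderiv ℝ f.1) := hf1.differentiable (by simp)
  constructor
  · simp [dd, h1]
  · simp only [evAt_apply, dDer_coe]
    have : fderiv ℝ (dd a' b' f.1) 0 = 0 := by
      rw [dd_eq, fderiv_comp _ (dL a' b').differentiableAt (hd1 0), h2]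
      simp
    rw [dd, this]; simp

end gen
end ana

section inst
variable {n : ℕ}

/-- first real direction -/
def e1 (s : Bool) (m : Fin n) : Cn n × Cn n :=
  (Pi.single m 1, if s then 0 else Pi.single m 1)
/-- second real direction -/
def eI (s b : Bool) (m : Fin n) : Cn n × Cn n :=
  (Pi.single m (if b then Complex.I else -Complex.I),
    if s then 0 else Pi.single m (if b then Complex.I else -Complex.I))

/-- the operators -/
def opv (s b : Bool) (m : Fin n) :
    Derivation ℂ (smoothAlg (Cn n × Cn n)) (smoothAlg (Cn n × Cn n)) :=
  dDer (e1 s m) (eI s b m)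

lemma opv_comm (s b : Bool) (m : Fin n) (s' b' : Bool) (m' : Fin n)
    (f : smoothAlg (Cn n × Cn n)) :
    opv s b m (opv s' b' m' f) = opv s' b' m' (opv s b m f) := by
  apply Subtype.ext
  simp only [opv, dDer_coe]
  exact dd_comm _ _ _ _ (sm f)

lemma slice_fderiv (f : smoothAlg (Cn n × Cn n)) (w z v : Cn n) :
    fderiv ℝ (fun x => f.1 (x, w)) z v = fderiv ℝ f.1 (z, w) (v, 0) := by
  have hd : Differentiable ℝ f.1 := ContDiff.differentiable (sm f) (by simp)
  have h := HasFDerivAt.comp (f := fun x : Cn n => (x, w)) z (hd (z, w)).hasFDerivAt (hasFDerivAt_prodMk_left (𝕜 := ℝ) z w)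
  have h2 := h.fderiv
  change fderiv ℝ (fun x => f.1 (x, w)) z = _ at h2
  rw [h2]
  simp

lemma slice_wdb (f : smoothAlg (Cn n × Cn n)) (w : Cn n) (j : Fin n) :
    wdb j (fun x => f.1 (x, w)) = fun x => (opv true true j f).1 (x, w) := by
  funext z
  simp only [wdb, slice_fderiv, opv, dDer_coe, dd, e1, eI, if_true]

lemma slice_wd (f : smoothAlg (Cn n × Cn n)) (w : Cn n) (j : Fin n) :
    wd j (fun x => f.1 (x, w)) = fun x => (opv true false j f).1 (x, w) := by
  funext z
  simp only [wd, slice_fderiv, opv, dDer_coe, dd, e1, eI, if_true]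
  have : ((Pi.single j (-Complex.I) : Cn n), (0 : Cn n)) = -(Pi.single j Complex.I, 0) := by
    ext i <;> simp [Pi.single_neg]
  simp only [Bool.false_eq_true, if_false]
  rw [this, map_neg]
  ring

/-- conjugation composed with a linear map -/
def cs (T : (Cn n × Cn n) →L[ℝ] (Cn n × Cn n)) (f : smoothAlg (Cn n × Cn n)) :
    smoothAlg (Cn n × Cn n) :=
  ⟨fun p => (starRingEnd ℂ) (f.1 (T p)), mem_sm
    ((Complex.conjCLE : ℂ →L[ℝ] ℂ).contDiff.comp ((sm f).comp T.contDiff))⟩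

lemma dDer_cs (T : (Cn n × Cn n) →L[ℝ] (Cn n × Cn n)) (f : smoothAlg (Cn n × Cn n))
    (a b : Cn n × Cn n) : dDer a b (cs T f) = cs T (dDer (T a) (-T b) f) := by
  apply Subtype.ext
  exact dd_conj_comp a b T (sm f)

/-- the swap map -/
def swp : (Cn n × Cn n) →L[ℝ] (Cn n × Cn n) :=
  (ContinuousLinearMap.snd ℝ (Cn n) (Cn n)).prod (ContinuousLinearMap.fst ℝ (Cn n) (Cn n))

lemma opv_cs_swp (b : Bool) (m : Fin n) (f : smoothAlg (Cn n × Cn n)) :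
    opv true (!b) m (cs swp f) = cs swp ((opv false b m - opv true b m) f) := by
  rw [opv, dDer_cs]
  congr 1
  apply Subtype.ext
  funext p
  have h1 : swp (e1 true m) = e1 false m - e1 true m := by
    ext i <;> simp [swp, e1]
  have h2 : -swp (eI true (!b) m) = eI false b m - eI true b m := by
    cases b <;> ext i <;> simp [swp, eI, Pi.single_neg]
  rw [h1, h2]
  simp [opv, dd]
  ring

lemma opv_cs_id (b : Bool) (m : Fin n) (f : smoothAlg (Cn n × Cn n)) :
    opv true (!b) m (cs (ContinuousLinearMap.id ℝ _) f) =
      cs (ContinuousLinearMap.id ℝ _) (opv true b m f) := by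
  rw [opv, dDer_cs]
  congr 1
  have h2 : -(eI true (!b) m) = eI true b m := by
    cases b <;> ext i <;> simp [eI, Pi.single_neg]
  simp only [ContinuousLinearMap.id_apply, h2]
  rfl

lemma opv_diag (b : Bool) (m : Fin n) (f : smoothAlg (Cn n × Cn n)) (h : ∀ z, f.1 (z, z) = 0) :
    ∀ z, (opv false b m f).1 (z, z) = 0 := by
  intro z
  have hd : Differentiable ℝ f.1 := ContDiff.differentiable (sm f) (by simp)
  have key : ∀ v, fderiv ℝ f.1 (z, z) (v, v) = 0 := by
    intro v
    have h2 := HasFDerivAt.comp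
      (f := ((ContinuousLinearMap.id ℝ (Cn n)).prod (ContinuousLinearMap.id ℝ (Cn n)))) z (hd (z, z)).hasFDerivAt
      (((ContinuousLinearMap.id ℝ (Cn n)).prod (ContinuousLinearMap.id ℝ (Cn n))).hasFDerivAt (x := z))
    have h3 : (f.1 ∘ ((ContinuousLinearMap.id ℝ (Cn n)).prod (ContinuousLinearMap.id ℝ (Cn n)))) = fun _ => 0 := by
      funext x; simpa using h x
    rw [h3] at h2
    have h4 := h2.unique (hasFDerivAt_const (0:ℂ) z)
    have h5 := congrArg (fun L => L v) h4
    simpa using h5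
  simp [opv, dd, e1, eI, key]

/-- lift of a function of `z` -/
def liftz (g : Cn n → ℂ) (hg : ContDiff ℝ (⊤ : ℕ∞) g) : smoothAlg (Cn n × Cn n) :=
  ⟨fun p => g p.1, mem_sm (hg.comp contDiff_fst)⟩

lemma opv_liftz (g : Cn n → ℂ) (hg : ContDiff ℝ (⊤ : ℕ∞) g) (b : Bool) (m : Fin n) :
    opv false b m (liftz g hg) = opv true b m (liftz g hg) := by
  apply Subtype.ext
  funext p
  have hd : Differentiable ℝ g := hg.differentiable (by simp)
  have h : HasFDerivAt (liftz g hg).1 ((fderiv ℝ g p.1).comp (ContinuousLinearMap.fst ℝ _ _)) p :=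
    (hd p.1).hasFDerivAt.comp p hasFDerivAt_fst
  simp [opv, dd, h.fderiv, e1, eI]

/-- coordinates -/
def zc (l : Fin n) : smoothAlg (Cn n × Cn n) :=
  coord ((ContinuousLinearMap.proj (R := ℝ) l : Cn n →L[ℝ] ℂ).comp (ContinuousLinearMap.fst ℝ _ _))
/-- coordinates -/
def wc (l : Fin n) : smoothAlg (Cn n × Cn n) :=
  coord ((ContinuousLinearMap.proj (R := ℝ) l : Cn n →L[ℝ] ℂ).comp (ContinuousLinearMap.snd ℝ _ _))
/-- coordinates -/
def zcb (l : Fin n) : smoothAlg (Cn n × Cn n) :=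
  coord ((Complex.conjCLE : ℂ →L[ℝ] ℂ).comp ((ContinuousLinearMap.proj (R := ℝ) l : Cn n →L[ℝ] ℂ).comp (ContinuousLinearMap.fst ℝ _ _)))
/-- coordinates -/
def wcb (l : Fin n) : smoothAlg (Cn n × Cn n) :=
  coord ((Complex.conjCLE : ℂ →L[ℝ] ℂ).comp ((ContinuousLinearMap.proj (R := ℝ) l : Cn n →L[ℝ] ℂ).comp (ContinuousLinearMap.snd ℝ _ _)))

lemma half_two : (algebraMap ℂ (smoothAlg (Cn n × Cn n))) (1 / 2) * 2 = 1 := by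
  rw [← map_ofNat (algebraMap ℂ (smoothAlg (Cn n × Cn n))) 2, ← map_mul]
  norm_num

lemma op_zc (s b : Bool) (m l : Fin n) :
    opv s b m (zc l) = if l = m then (if b then 0 else 1) else 0 := by
  rw [opv, zc, dDer_coord]
  by_cases h : l = m
  · subst h
    cases b <;> simp [e1, eI]
    norm_num
    exact half_two
  · cases b <;> simp [e1, eI, h]

lemma op_zcb (s b : Bool) (m l : Fin n) :
    opv s b m (zcb l) = if l = m then (if b then 1 else 0) else 0 := by
  rw [opv, zcb, dDer_coord]
  by_cases h : l = m
  · subst h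
    cases b <;> simp [e1, eI]
    norm_num
    exact half_two
  · cases b <;> simp [e1, eI, h]

lemma op_wc (s b : Bool) (m l : Fin n) :
    opv s b m (wc l) = if s then 0 else if l = m then (if b then 0 else 1) else 0 := by
  rw [opv, wc, dDer_coord]
  by_cases h : l = m
  · subst h
    cases s <;> cases b <;> simp [e1, eI]
    norm_num
    exact half_two
  · cases s <;> cases b <;> simp [e1, eI, h]

lemma op_wcb (s b : Bool) (m l : Fin n) :
    opv s b m (wcb l) = if s then 0 else if l = m then (if b then 1 else 0) else 0 := by
  rw [opv, wcb, dDer_coord]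
  by_cases h : l = m
  · subst h
    cases s <;> cases b <;> simp [e1, eI]
    norm_num
    exact half_two
  · cases s <;> cases b <;> simp [e1, eI, h]

/-- quadratic part of `ψ` -/
def Qpsi (lam : Fin n → ℝ) : smoothAlg (Cn n × Cn n) :=
  Complex.I • ∑ j, ((|lam j| : ℝ) : ℂ) • ((zc j - wc j) * (zcb j - wcb j))
   + Complex.I • ∑ j, ((lam j : ℝ) : ℂ) • (zcb j * wc j - wcb j * zc j)

/-- quadratic part of `φ` -/
def Qphi (lam : Fin n → ℝ) : smoothAlg (Cn n × Cn n) :=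
  ∑ j, ((lam j : ℝ) : ℂ) • (zc j * zcb j)

lemma A_Q (lam : Fin n → ℝ) (l : Fin n) :
    Complex.I • opv true true l (Qpsi lam) + opv true true l (Qphi lam) =
      ((lam l - |lam l| : ℝ) : ℂ) • (zc l - wc l) := by
  simp only [Qpsi, Qphi, map_add, map_sum, Derivation.map_smul, Derivation.leibniz, map_sub, op_zc,
    op_zcb, op_wc, op_wcb]
  simp [Finset.sum_add_distrib, smul_smul, ← mul_assoc, smul_sub, sub_smul]
  module

lemma B_Q (lam : Fin n → ℝ) (l : Fin n) :
    (-Complex.I) • opv true false l (Qpsi lam) + opv true false l (Qphi lam) =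
      ((lam l + |lam l| : ℝ) : ℂ) • (zcb l - wcb l) := by
  simp only [Qpsi, Qphi, map_add, map_sum, Derivation.map_smul, Derivation.leibniz, map_sub, op_zc,
    op_zcb, op_wc, op_wcb]
  simp [Finset.sum_add_distrib, smul_smul, ← mul_assoc, smul_sub, sub_smul, add_smul]
  module

lemma Qpsi_apply (lam : Fin n → ℝ) (p : Cn n × Cn n) : (Qpsi lam).1 p =
    (Complex.I * ∑ j, ((|lam j| * Complex.normSq (p.1 j - p.2 j) : ℝ) : ℂ)
          + Complex.I * ∑ j, ((lam j : ℝ) : ℂ) *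
              ((starRingEnd ℂ) (p.1 j) * p.2 j - (starRingEnd ℂ) (p.2 j) * p.1 j)) := by
  rw [← evAt_apply, Qpsi]
  simp only [map_add, map_smul, map_sum, map_mul, map_sub, smul_eq_mul]
  congr 2
  refine Finset.sum_congr rfl fun j _ => ?_
  rw [Complex.ofReal_mul, Complex.normSq_eq_conj_mul_self]
  simp [zc, wc, zcb, wcb, coord]
  first | done | (left; ring)

lemma Qphi_apply (lam : Fin n → ℝ) (p : Cn n × Cn n) : (Qphi lam).1 p =
    ((∑ j, lam j * Complex.normSq (p.1 j) : ℝ) : ℂ) := by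
  rw [← evAt_apply, Qphi]
  simp only [map_smul, map_sum, map_mul, smul_eq_mul, Complex.ofReal_sum]
  refine Finset.sum_congr rfl fun j _ => ?_
  rw [Complex.ofReal_mul, Complex.normSq_eq_conj_mul_self]
  simp [zc, zcb, coord]
  first | done | (left; ring)

end inst


set_option maxHeartbeats 4000000 in
/-- the mixed fourth derivative `∂⁴ψ/∂z̄_j∂z_j∂z̄_k∂z_k(0,0)`
(derivatives in the `z`-variables, `w` held fixed at `0`) for `q+1 ≤ j,k ≤ n`. -/
theorem statement8 (n q : ℕ) (hn : 1 ≤ n) (hq : q ≤ n) (lam : Fin n → ℝ)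
    (hneg : ∀ j : Fin n, (j : ℕ) < q → lam j < 0)
    (hpos : ∀ j : Fin n, q ≤ (j : ℕ) → 0 < lam j)
    (φ : Cn n → ℝ) (hφ : PhiOK lam φ)
    (ψ : Cn n → Cn n → ℂ) (hψ : Admissible lam φ ψ)
    (j k : Fin n) (hj : q ≤ (j : ℕ)) (hk : q ≤ (k : ℕ)) :
    wdb j (wd j (wdb k (wd k (fun z => ψ z 0)))) 0 =
      (∑ t : Fin n, if (t : ℕ) < q then
        ((2 / (|lam t| + |lam j| + |lam k|) ^ 2 *
            (|lam t| + |lam j| + |lam k|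
              - |lam j| * |lam k| / (|lam j| + |lam t|)
              - |lam j| * |lam k| / (|lam k| + |lam t|)) : ℝ) : ℂ) * Complex.I *
          (Complex.normSq (wd t (wdb j (wdb k (cplx φ))) 0) : ℂ)
      else 0)
      + Complex.I * wdb j (wd j (wdb k (wd k (cplx φ)))) 0 := by
  obtain ⟨hφs, hφO⟩ := hφ
  obtain ⟨hs, hzero, hsymm, -, -, -, -, -, hd, hO⟩ := hψ
  have hcφ : ContDiff ℝ (⊤ : ℕ∞) (cplx φ) := Complex.ofRealCLM.contDiff.comp hφs
  set Ψ : smoothAlg (Cn n × Cn n) := ⟨fun p => ψ p.1 p.2, mem_sm hs⟩ with hΨ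
  set Φ : smoothAlg (Cn n × Cn n) := liftz (cplx φ) hcφ with hΦ
  -- translate the goal
  have gψ : wdb j (wd j (wdb k (wd k (fun z => ψ z 0)))) 0 =
      evAt 0 (opv true true j (opv true false j (opv true true k (opv true false k Ψ)))) := by
    have : (fun z => ψ z 0) = fun z => Ψ.1 (z, 0) := rfl
    rw [this, slice_wd, slice_wdb, slice_wd, slice_wdb]; rfl
  have gφ : wdb j (wd j (wdb k (wd k (cplx φ)))) 0 =
      evAt 0 (opv true true j (opv true false j (opv true true k (opv true false k Φ)))) := by
    have : cplx φ = fun z => Φ.1 (z, 0) := rfl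
    rw [this, slice_wd, slice_wdb, slice_wd, slice_wdb]; rfl
  have gt : ∀ t, wd t (wdb j (wdb k (cplx φ))) 0 =
      evAt 0 (opv true false t (opv true true j (opv true true k Φ))) := by
    intro t
    have : cplx φ = fun z => Φ.1 (z, 0) := rfl
    rw [this, slice_wdb, slice_wdb, slice_wd]; rfl
  rw [gψ, gφ]
  simp only [gt]
  -- remainders
  have rΨ : (Ψ - Qpsi lam).1 =O[nhds 0] fun p => ‖p‖ ^ 3 := by
    refine hO.congr_left fun p => ?_
    rw [← Qpsi_apply]; rfl
  have rΦ : (Φ - Qphi lam).1 =O[nhds 0] fun p => ‖p‖ ^ 3 := by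
    have h0 : Filter.Tendsto (Prod.fst : Cn n × Cn n → Cn n) (nhds 0) (nhds 0) :=
      (continuous_fst (X := Cn n) (Y := Cn n)).tendsto 0
    have h1 := hφO.comp_tendsto h0
    have h2 : ((fun z : Cn n => ‖z‖ ^ 3) ∘ (Prod.fst : Cn n × Cn n → Cn n)) =O[nhds 0]
        fun p : Cn n × Cn n => ‖p‖ ^ 3 := by
      refine Asymptotics.IsBigO.of_bound 1 (Filter.Eventually.of_forall fun p => ?_)
      simp only [Function.comp, norm_pow, norm_norm, one_mul]
      exact pow_le_pow_left₀ (norm_nonneg _) (norm_fst_le p) 3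
    have h3 := h1.trans h2
    refine Asymptotics.IsBigO.trans (Asymptotics.IsBigO.of_bound 1 (Filter.Eventually.of_forall fun p => ?_)) h3
    have : (Φ - Qphi lam).1 p = ((φ p.1 - ∑ j, lam j * Complex.normSq (p.1 j) : ℝ) : ℂ) := by
      rw [Complex.ofReal_sub, ← Qphi_apply]; rfl
    rw [this, Complex.norm_real, one_mul]; exact le_rfl
  have evc : ∀ l, evAt (0 : Cn n × Cn n) (zc l - wc l) = 0 ∧
      evAt (0 : Cn n × Cn n) (zcb l - wcb l) = 0 := by
    intro l; simp [zc, wc, zcb, wcb, coord]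
  have Adec : ∀ l, Complex.I • opv true true l Ψ + opv true true l Φ =
      ((lam l - |lam l| : ℝ) : ℂ) • (zc l - wc l) + (Complex.I • opv true true l (Ψ - Qpsi lam)
        + opv true true l (Φ - Qphi lam)) := by
    intro l
    rw [← A_Q]
    simp only [map_sub, smul_sub]
    abel
  have Bdec : ∀ l, (-Complex.I) • opv true false l Ψ + opv true false l Φ =
      ((lam l + |lam l| : ℝ) : ℂ) • (zcb l - wcb l) + ((-Complex.I) • opv true false l (Ψ - Qpsi lam)
        + opv true false l (Φ - Qphi lam)) := by
    intro l
    rw [← B_Q]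
    simp only [map_sub, smul_sub]
    abel
  have z1 : ∀ s b m, evAt 0 (opv s b m (Ψ - Qpsi lam)) = 0 := fun s b m =>
    (o3_dd _ rΨ _ _ 0 0).1
  have z2 : ∀ s b m, evAt 0 (opv s b m (Φ - Qphi lam)) = 0 := fun s b m =>
    (o3_dd _ rΦ _ _ 0 0).1
  have z3 : ∀ s b m s' b' m', evAt 0 (opv s b m (opv s' b' m' (Ψ - Qpsi lam))) = 0 :=
    fun s b m s' b' m' => (o3_dd _ rΨ _ _ _ _).2
  have z4 : ∀ s b m s' b' m', evAt 0 (opv s b m (opv s' b' m' (Φ - Qphi lam))) = 0 :=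
    fun s b m s' b' m' => (o3_dd _ rΦ _ _ _ _).2
  -- the eikonal equation
  have flat : ∀ m, iteratedFDeriv ℝ m (∑ l, (Complex.I • opv true true l Ψ + opv true true l Φ) *
      ((-Complex.I) • opv true false l Ψ + opv true false l Φ)).1 0 = 0 := by
    intro m
    have h := hd m 0
    have e : (fun p : Cn n × Cn n =>
        ∑ j, (Complex.I * wdb j (fun x => ψ x p.2) p.1 + wdb j (cplx φ) p.1) *
             (- Complex.I * wd j (fun x => ψ x p.2) p.1 + wd j (cplx φ) p.1)) =
        (∑ l, (Complex.I • opv true true l Ψ + opv true true l Φ) *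
      ((-Complex.I) • opv true false l Ψ + opv true false l Φ)).1 := by
      funext p
      rw [← evAt_apply p]
      simp only [map_sum, map_mul, map_add, map_smul, smul_eq_mul]
      refine Finset.sum_congr rfl fun l _ => ?_
      have a1 : wdb l (fun x => ψ x p.2) p.1 = evAt p (opv true true l Ψ) :=
        congrFun (slice_wdb Ψ p.2 l) p.1
      have a2 : wd l (fun x => ψ x p.2) p.1 = evAt p (opv true false l Ψ) :=
        congrFun (slice_wd Ψ p.2 l) p.1
      have a3 : wdb l (cplx φ) p.1 = evAt p (opv true true l Φ) :=
        congrFun (slice_wdb Φ p.2 l) p.1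
      have a4 : wd l (cplx φ) p.1 = evAt p (opv true false l Φ) :=
        congrFun (slice_wd Φ p.2 l) p.1
      rw [a1, a2, a3, a4]
    rw [e] at h
    exact h
  have flatD : ∀ (f : smoothAlg (Cn n × Cn n)), (∀ m, iteratedFDeriv ℝ m f.1 0 = 0) →
      ∀ s b l m, iteratedFDeriv ℝ m (opv s b l f).1 0 = 0 := by
    intro f hf s b l
    exact dd_flat _ _ (sm f) 0 hf
  have flat0 : ∀ (f : smoothAlg (Cn n × Cn n)), (∀ m, iteratedFDeriv ℝ m f.1 0 = 0) →
      evAt 0 f = 0 := by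
    intro f hf
    have h := hf 0
    have h2 := congrArg (fun L => L (fun _ => 0)) h
    simpa using h2
  have hΨsym : Ψ = -cs swp Ψ := by
    apply Subtype.ext
    funext p
    exact hsymm p.1 p.2
  have hΦreal : Φ = cs (ContinuousLinearMap.id ℝ _) Φ := by
    apply Subtype.ext
    funext p
    exact (Complex.conj_ofReal _).symm
  refine core_final (evAt 0) opv opv_comm q lam hneg hpos Ψ Φ (opv_liftz _ hcφ)
    (fun l => Complex.I • opv true true l Ψ + opv true true l Φ)
    (fun l => (-Complex.I) • opv true false l Ψ + opv true false l Φ)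
    (fun _ => rfl) (fun _ => rfl) ?_ ?_ ?_ ?_ ?_ ?_ ?_ ?_ ?_ j k hj hk
  · intro l
    rw [Adec]
    simp only [map_add, map_smul, (evc l).1, z1, z2, smul_zero, add_zero]
  · intro l
    rw [Bdec]
    simp only [map_add, map_smul, (evc l).2, z1, z2, smul_zero, add_zero]
  · intro s b m l
    simp only [Adec, map_add, Derivation.map_smul, map_smul, z3, z4, smul_zero, add_zero]
    simp only [map_sub, op_zc, op_wc]
    by_cases h : l = m
    · subst h
      cases s <;> cases b <;> simp [ca]
    · cases s <;> simp [h]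
  · intro s b m l
    simp only [Bdec, map_add, Derivation.map_smul, map_smul, z3, z4, smul_zero, add_zero]
    simp only [map_sub, op_zcb, op_wcb]
    by_cases h : l = m
    · subst h
      cases s <;> cases b <;> simp [cb]
    · cases s <;> simp [h]
  · intros
    exact flat0 _ (flatD _ (flatD _ (flatD _ flat _ _ _) _ _ _) _ _ _)
  · intros
    exact flat0 _ (flatD _ (flatD _ (flatD _ (flatD _ flat _ _ _) _ _ _) _ _ _) _ _ _)
  · intro b1 m1 b2 m2 b3 m3
    exact opv_diag _ _ _ (opv_diag _ _ _ (opv_diag _ _ _ hzero)) 0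
  · intro b1 m1 b2 m2 b3 m3
    conv_lhs => rw [hΨsym]
    rw [map_neg, map_neg, map_neg, map_neg, opv_cs_swp, opv_cs_swp, opv_cs_swp]
    congr 1
  · intro b1 m1 b2 m2 b3 m3
    conv_lhs => rw [hΦreal]
    rw [opv_cs_id, opv_cs_id, opv_cs_id]
    rfl
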